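/- Let φ : ℝ^k → ℝ be a differentiable, non-negative function whose gradient is H-Lipschitz with respect to the Euclidean norm (‖∇φ(a) - ∇φ(a')‖ ≤ H·‖a - a'‖ for all a, a'), where H > 0. Then for all a, a' ∈ ℝ^k, (φ(a) - φ(a'))² ≤ 6·H·(φ(a) + φ(a'))·‖a - a'‖². -/

import Mathlib

theorem descent_aux {k : ℕ}
    (φ : EuclideanSpace ℝ (Fin k) → ℝ) (H : ℝ)
    (hdiff : Differentiable ℝ φ)
    (hsmooth : ∀ a a' : EuclideanSpace ℝ (Fin k),
      ‖gradient φ a - gradient φ a'‖ ≤ H * ‖a - a'‖)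
    (x d : EuclideanSpace ℝ (Fin k)) :
    φ (x + d) ≤ φ x + inner ℝ (gradient φ x) d + H / 2 * ‖d‖ ^ 2 := by
  have hder : ∀ t : ℝ, HasDerivAt
      (fun t : ℝ => φ (x + t • d) - t * inner ℝ (gradient φ x) d - t ^ 2 * (H / 2 * ‖d‖ ^ 2))
      (inner ℝ (gradient φ (x + t • d)) d - 1 * inner ℝ (gradient φ x) d
        - (2 * t) * (H / 2 * ‖d‖ ^ 2)) t := by
    intro t
    have h1 : HasDerivAt (fun t : ℝ => x + t • d) d t := by
      simpa using ((hasDerivAt_id t).smul_const d).const_add x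
    have h2 := (hdiff (x + t • d)).hasGradientAt.hasFDerivAt.comp_hasDerivAt t h1
    have h3 := (hasDerivAt_id t).mul_const (inner ℝ (gradient φ x) d)
    have h4 := (hasDerivAt_pow 2 t).mul_const (H / 2 * ‖d‖ ^ 2)
    have h5 := (h2.sub h3).sub h4
    simp only [InnerProductSpace.toDual_apply_apply, Nat.cast_ofNat, Nat.add_one_sub_one, pow_one] at h5
    exact h5
  have hanti := antitoneOn_of_deriv_nonpos (convex_Icc (0:ℝ) 1)
    (fun t _ => (hder t).continuousAt.continuousWithinAt)
    (fun t _ => (hder t).differentiableAt.differentiableWithinAt)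
    (fun t ht => by
      rw [interior_Icc] at ht
      rw [(hder t).deriv]
      have h1 := real_inner_le_norm (gradient φ (x + t • d) - gradient φ x) d
      have h2 := hsmooth (x + t • d) x
      rw [add_sub_cancel_left, norm_smul, Real.norm_of_nonneg ht.1.le] at h2
      rw [inner_sub_left] at h1
      have h3 := mul_le_mul_of_nonneg_right h2 (norm_nonneg d)
      nlinarith)
  have := hanti (Set.left_mem_Icc.2 zero_le_one) (Set.right_mem_Icc.2 zero_le_one) zero_le_one
  simp only [one_smul, zero_smul, add_zero, one_mul, zero_mul, one_pow, sub_zero, ne_eq,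
    OfNat.ofNat_ne_zero, not_false_eq_true, zero_pow] at this
  linarith

theorem half_aux {k : ℕ}
    (φ : EuclideanSpace ℝ (Fin k) → ℝ) (H : ℝ) (hH : 0 < H)
    (hdiff : Differentiable ℝ φ)
    (hnonneg : ∀ a : EuclideanSpace ℝ (Fin k), 0 ≤ φ a)
    (hsmooth : ∀ a a' : EuclideanSpace ℝ (Fin k),
      ‖gradient φ a - gradient φ a'‖ ≤ H * ‖a - a'‖)
    (a a' : EuclideanSpace ℝ (Fin k)) (hle : φ a' ≤ φ a) :
    (φ a - φ a') ^ 2 ≤ 6 * H * (φ a + φ a') * ‖a - a'‖ ^ 2 := by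
  have hD := descent_aux φ H hdiff hsmooth a' (a - a')
  rw [add_sub_cancel] at hD
  have hdisc := discrim_le_zero (a := H / 2 * ‖a - a'‖ ^ 2)
    (b := inner ℝ (gradient φ a') (a - a')) (c := φ a') (fun t => by
      have h := descent_aux φ H hdiff hsmooth a' (t • (a - a'))
      have h0 := hnonneg (a' + t • (a - a'))
      rw [inner_smul_right, norm_smul, mul_pow, Real.norm_eq_abs, sq_abs] at h
      nlinarith)
  unfold discrim at hdisc
  have hw : 0 ≤ H / 2 * ‖a - a'‖ ^ 2 := by positivity
  have hq := hnonneg a'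
  have e : 6 * H * (φ a + φ a') * ‖a - a'‖ ^ 2
      = 12 * (H / 2 * ‖a - a'‖ ^ 2) * (φ a + φ a') := by ring
  rw [e]
  generalize H / 2 * ‖a - a'‖ ^ 2 = w at *
  generalize inner ℝ (gradient φ a') (a - a') = G at *
  generalize φ a = p at *
  generalize φ a' = q at *
  have hwq := mul_nonneg hw hq
  have hwp := mul_nonneg hw (hq.trans hle)
  rcases le_total (p - q) (12 * w) with h | h
  · have := mul_le_mul_of_nonneg_right h (sub_nonneg.2 hle)
    nlinarith
  · have h1 : 11 / 12 * (p - q) ≤ G := by linarith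
    have h2 := pow_le_pow_left₀ (by linarith : 0 ≤ 11 / 12 * (p - q)) h1 2
    nlinarith

/-- Lemma 2 of the paper (multi-dimensional case): if `φ : ℝ^k → ℝ` is differentiable,
non-negative, and has `H`-Lipschitz gradient (`H > 0`), then for all `a, a'`,
`(φ(a) - φ(a'))² ≤ 6·H·(φ(a) + φ(a'))·‖a - a'‖²`. -/
theorem multi_dim_H_bound {k : ℕ}
    (φ : EuclideanSpace ℝ (Fin k) → ℝ) (H : ℝ) (hH : 0 < H)
    (hdiff : Differentiable ℝ φ)
    (hnonneg : ∀ a : EuclideanSpace ℝ (Fin k), 0 ≤ φ a)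
    (hsmooth : ∀ a a' : EuclideanSpace ℝ (Fin k),
      ‖gradient φ a - gradient φ a'‖ ≤ H * ‖a - a'‖) :
    ∀ a a' : EuclideanSpace ℝ (Fin k),
      (φ a - φ a') ^ 2 ≤ 6 * H * (φ a + φ a') * ‖a - a'‖ ^ 2 := by
  intro a a'
  rcases le_total (φ a') (φ a) with h | h
  · exact half_aux φ H hH hdiff hnonneg hsmooth a a' h
  · have := half_aux φ H hH hdiff hnonneg hsmooth a' a h
    rw [norm_sub_rev a a']
    linarith [this, sq_nonneg (φ a - φ a'), (by ring : (φ a - φ a') ^ 2 = (φ a' - φ a) ^ 2),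
      (by ring : 6 * H * (φ a + φ a') * ‖a' - a‖ ^ 2 = 6 * H * (φ a' + φ a) * ‖a' - a‖ ^ 2)]
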